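/- Let u be a C⁴-smooth strictly octonionic plurisubharmonic function on an open subset of ℝ¹⁶ ≅ 𝕆², and let z be a point at which the octonionic Hessian of u is diagonal, i.e. u_{1̄2}(z) = 0. Then Σ_{p=0}^{7} Σ_{i,k=1}^{2} |∂u_{k̄k}/∂x_i^p (z)|² / (u_{īi}(z)·u_{k̄k}(z)) ≤ 4·Σ_{p=0}^{7} Σ_{i,k,l=1}^{2} |∂u_{k̄i}/∂x_l^p (z)|² / (u_{īi}(z)·u_{k̄k}(z)), where |·| denotes the octonionic norm and u_{1̄1}(z), u_{2̄2}(z) > 0. (Proposition 13.1, the elementary inequality.) -/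

import Mathlib

noncomputable section

open scoped Quaternion

/-- The octonions, realized as pairs of quaternions (Cayley–Dickson). -/
abbrev Oct : Type := ℍ[ℝ] × ℍ[ℝ]

/-- Octonionic multiplication: (x,y)·(w,z) = (xw − z̄y, zx + yw̄). -/
def omul (a b : Oct) : Oct :=
  (a.1 * b.1 - star b.2 * a.2, b.2 * a.1 + a.2 * star b.1)

/-- Octonionic conjugation. -/
def oconj (a : Oct) : Oct := (star a.1, -a.2)

/-- Real part of an octonion. -/
def oRe (a : Oct) : ℝ := a.1.re

/-- Squared norm |q|² = Re(q·q̄). -/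
def onSq (a : Oct) : ℝ := oRe (omul a (oconj a))

/-- Octonionic Hermitian 2×2 matrix: (α, β, q) represents [[α, q],[q̄, β]]. -/
abbrev Herm : Type := ℝ × ℝ × Oct

/-- Determinant of an octonionic Hermitian 2×2 matrix. -/
def detH (A : Herm) : ℝ := A.1 * A.2.1 - onSq A.2.2

/-- The quadratic form ξ ↦ Re(ξ*Aξ). -/
def qform (A : Herm) (ξ : Oct × Oct) : ℝ :=
  A.1 * onSq ξ.1 + A.2.1 * onSq ξ.2 + 2 * oRe (omul (oconj ξ.1) (omul A.2.2 ξ.2))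

/-- Positive definiteness. -/
def PosDefH (A : Herm) : Prop := ∀ ξ : Oct × Oct, ξ ≠ 0 → 0 < qform A ξ

/-- Nonnegative definiteness. -/
def NonnegDefH (A : Herm) : Prop := ∀ ξ : Oct × Oct, 0 ≤ qform A ξ

/-- The point space ℝ¹⁶, with coordinates x_i^p, i = 1,2 and p = 0,…,7. -/
abbrev Pt : Type := Fin 2 → Fin 8 → ℝ

def qI : ℍ[ℝ] := ⟨0, 1, 0, 0⟩
def qJ : ℍ[ℝ] := ⟨0, 0, 1, 0⟩
def qK : ℍ[ℝ] := ⟨0, 0, 0, 1⟩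

/-- The standard real basis e₀ = 1, e₁, …, e₇ of the octonions. -/
def e : Fin 8 → Oct :=
  ![((1 : ℍ[ℝ]), 0), (qI, 0), (qJ, 0), (qK, 0),
    (0, (1 : ℍ[ℝ])), (0, qI), (0, qJ), (0, qK)]

/-- The coordinate unit vector of the coordinate x_i^p. -/
def uvec (i : Fin 2) (p : Fin 8) : Pt := Pi.single i (Pi.single p 1)

/-- Partial derivative ∂f/∂x_i^p of a real-valued function on ℝ¹⁶. -/
def pd (i : Fin 2) (p : Fin 8) (f : Pt → ℝ) : Pt → ℝ :=
  fun x => fderiv ℝ f x (uvec i p)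

/-- The entry f_{ī j} = Σ_{p,q} e_p·(∂²f/∂x_i^p∂x_j^q)·conj(e_q) of the octonionic Hessian. -/
def hessEntry (f : Pt → ℝ) (i j : Fin 2) (x : Pt) : Oct :=
  ∑ p, ∑ q, pd i p (pd j q f) x • omul (e p) (oconj (e q))

/-- The Laplacian Δᵢ = Σ_p ∂²/∂(x_i^p)² in the i-th octonionic variable. -/
def lap (i : Fin 2) (f : Pt → ℝ) (x : Pt) : ℝ := ∑ p, pd i p (pd i p f) x

/-- The identification ℝ¹⁶ ≅ 𝕆². -/
def toO2 (x : Pt) : Oct × Oct := (∑ p, x 0 p • e p, ∑ p, x 1 p • e p)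

/-!
By alternativity, `(e_p ē_q) e_r + (e_p ē_r) e_q = 2 δ_{qr} e_p`. Since `∂_k^q ∂_k^r` is
symmetric in `q` and `r`, multiplying the derivatives of `f_{īk}` by the basis on the right gives
`Σ_r (∂_k^r f_{īk}) e_r = Σ_p (∂_i^p f_{k̄k}) e_p`. The norm is multiplicative, so
Cauchy–Schwarz over the eight values of `r` yields
`Σ_p |∂_i^p f_{k̄k}|² ≤ 8 Σ_r |∂_k^r f_{īk}|²`. For `i ≠ k` each term on the right occurs twice
in the sum over all entries, once for `f_{īk}` and once for its conjugate `f_{k̄i}`, so the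
constant 8 becomes 4.
-/

/-- Multiplication `omul` as a real bilinear map, giving access to `map_sum` and `map_smul` in each
factor. -/
def omulBilin : Oct →ₗ[ℝ] Oct →ₗ[ℝ] Oct :=
  LinearMap.mk₂ ℝ omul
    (fun _ _ _ => by
      ext : 1 <;> simp only [omul, Prod.fst_add, Prod.snd_add] <;> noncomm_ring)
    (fun _ _ _ => by ext : 1 <;> simp [omul, smul_sub])
    (fun _ _ _ => by
      ext : 1 <;> simp only [omul, Prod.fst_add, Prod.snd_add, star_add] <;> noncomm_ring)
    (fun _ _ _ => by ext : 1 <;> simp [omul, smul_sub])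

theorem omulBilin_apply (a b : Oct) : omulBilin a b = omul a b := rfl

/-- Conjugation `oconj` as a real linear map, giving access to `map_sum` and `map_smul`. -/
def oconjLinear : Oct →ₗ[ℝ] Oct where
  toFun := oconj
  map_add' _ _ := by ext <;> simp [oconj, add_comm]
  map_smul' _ _ := by ext <;> simp [oconj]

theorem oconjLinear_apply (a : Oct) : oconjLinear a = oconj a := rfl

theorem oconj_omul_oconj (a b : Oct) : oconj (omul a (oconj b)) = omul b (oconj a) := by
  simp [omul, oconj, add_comm]

theorem onSq_eq_normSq_add_normSq (a : Oct) :
    onSq a = Quaternion.normSq a.1 + Quaternion.normSq a.2 := by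
  simp [onSq, oRe, omul, oconj, Quaternion.self_mul_star, Quaternion.star_mul_self]

theorem onSq_eq_norm_sq_add_norm_sq (a : Oct) : onSq a = ‖a.1‖ ^ 2 + ‖a.2‖ ^ 2 := by
  simp only [onSq_eq_normSq_add_normSq, Quaternion.normSq_eq_norm_mul_self, sq]

theorem onSq_nonneg (a : Oct) : 0 ≤ onSq a := by
  rw [onSq_eq_norm_sq_add_norm_sq]
  positivity

theorem onSq_oconj (a : Oct) : onSq (oconj a) = onSq a := by
  simp [onSq_eq_norm_sq_add_norm_sq, oconj]

theorem quaternion_re_mul_comm {R : Type*} [CommRing R] (x y : ℍ[R]) :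
    (x * y).re = (y * x).re := by
  simp only [Quaternion.re_mul]
  ring

theorem onSq_omul (a b : Oct) : onSq (omul a b) = onSq a * onSq b := by
  have cross : (a.1 * b.1 * star (star b.2 * a.2)).re
      = (b.2 * a.1 * star (a.2 * star b.1)).re := by
    simpa [mul_assoc] using quaternion_re_mul_comm (a.1 * b.1 * star a.2) b.2
  simp only [onSq_eq_normSq_add_normSq, omul, sub_eq_add_neg, Quaternion.normSq_add, star_neg,
    mul_neg, Quaternion.re_neg, Quaternion.normSq_neg, map_mul, Quaternion.normSq_star, cross]
  ring

theorem onSq_smul (c : ℝ) (a : Oct) : onSq (c • a) = c ^ 2 * onSq a := by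
  simp [onSq_eq_norm_sq_add_norm_sq, norm_smul, mul_pow, mul_add]

theorem onSq_sum_le {ι : Type*} (s : Finset ι) (v : ι → Oct) :
    onSq (∑ r ∈ s, v r) ≤ s.card * ∑ r ∈ s, onSq (v r) := by
  have norm_sq_sum_le (f : ι → ℍ[ℝ]) : ‖∑ r ∈ s, f r‖ ^ 2 ≤ s.card * ∑ r ∈ s, ‖f r‖ ^ 2 :=
    calc ‖∑ r ∈ s, f r‖ ^ 2 ≤ (∑ r ∈ s, ‖f r‖) ^ 2 := by gcongr; exact norm_sum_le s f
      _ ≤ s.card * ∑ r ∈ s, ‖f r‖ ^ 2 := sq_sum_le_card_mul_sum_sq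
  simp only [onSq_eq_norm_sq_add_norm_sq, Finset.sum_add_distrib, mul_add, Prod.fst_sum,
    Prod.snd_sum]
  exact add_le_add (norm_sq_sum_le _) (norm_sq_sum_le _)

theorem add_oconj (a : Oct) : a + oconj a = (2 * oRe a) • e 0 := by
  ext <;> simp [oconj, oRe, e, two_mul]

theorem omul_oconj_add_swap (a b : Oct) :
    omul a (oconj b) + omul b (oconj a) = (2 * oRe (omul a (oconj b))) • e 0 := by
  rw [← oconj_omul_oconj a b, add_oconj]

theorem omul_omul_oconj_self (x a : Oct) : omul (omul x (oconj a)) a = onSq a • x := by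
  obtain ⟨s, t⟩ := x
  obtain ⟨w, z⟩ := a
  refine Prod.ext ?_ ?_
  · calc (s * star w - star (-z) * t) * w - star z * (-z * s + t * star (star w))
        = s * (star w * w) + star z * z * s := by rw [star_neg, star_star]; noncomm_ring
      _ = onSq (w, z) • s := by
        rw [Quaternion.star_mul_self, Quaternion.star_mul_self, Quaternion.mul_coe_eq_smul,
          Quaternion.coe_mul_eq_smul, ← add_smul, onSq_eq_normSq_add_normSq]
  · calc z * (s * star w - star (-z) * t) + (-z * s + t * star (star w)) * star w
        = t * (w * star w) + z * star z * t := by rw [star_neg, star_star]; noncomm_ring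
      _ = onSq (w, z) • t := by
        rw [Quaternion.self_mul_star, Quaternion.self_mul_star, Quaternion.mul_coe_eq_smul,
          Quaternion.coe_mul_eq_smul, ← add_smul, onSq_eq_normSq_add_normSq]

theorem onSq_add (a b : Oct) : onSq (a + b) = onSq a + onSq b + 2 * oRe (omul a (oconj b)) := by
  simp only [onSq_eq_normSq_add_normSq, omul, oconj, oRe, Prod.fst_add, Prod.snd_add,
    Quaternion.normSq_add, star_neg, neg_mul, sub_neg_eq_add, star_star, Quaternion.re_add,
    quaternion_re_mul_comm (star b.2)]
  ring

theorem omul_omul_oconj_add_swap (x a b : Oct) :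
    omul (omul x (oconj a)) b + omul (omul x (oconj b)) a
      = (2 * oRe (omul a (oconj b))) • x := by
  have h := omul_omul_oconj_self x (a + b)
  rw [onSq_add] at h
  simp only [← omulBilin_apply, ← oconjLinear_apply, map_add, LinearMap.add_apply] at h
  simp only [omulBilin_apply, oconjLinear_apply, omul_omul_oconj_self] at h
  linear_combination (norm := module) h

theorem oRe_omul_e_oconj_e (p q : Fin 8) :
    oRe (omul (e p) (oconj (e q))) = if p = q then 1 else 0 := by
  have hI : qI.re = 0 ∧ qI.imI = 1 ∧ qI.imJ = 0 ∧ qI.imK = 0 := ⟨rfl, rfl, rfl, rfl⟩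
  have hJ : qJ.re = 0 ∧ qJ.imI = 0 ∧ qJ.imJ = 1 ∧ qJ.imK = 0 := ⟨rfl, rfl, rfl, rfl⟩
  have hK : qK.re = 0 ∧ qK.imI = 0 ∧ qK.imJ = 0 ∧ qK.imK = 1 := ⟨rfl, rfl, rfl, rfl⟩
  fin_cases p <;> fin_cases q <;> simp [e, omul, oconj, oRe, hI, hJ, hK]

theorem onSq_e (p : Fin 8) : onSq (e p) = 1 := by
  simp [onSq, oRe_omul_e_oconj_e]

theorem sum_smul_eq_sum_diag_smul {ι R M : Type*} [Fintype ι] [DecidableEq ι] [Semiring R]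
    [Invertible (2 : R)] [AddCommMonoid M] [Module R M] {s : ι → ι → R}
    (hs : ∀ q r, s q r = s r q) {w : ι → ι → M} {x : M}
    (hw : ∀ q r, w q r + w r q = if q = r then (2 : R) • x else 0) :
    ∑ q, ∑ r, s q r • w q r = (∑ q, s q q) • x := by
  have swap : ∑ q, ∑ r, s q r • w q r = ∑ q, ∑ r, s q r • w r q := by
    rw [Finset.sum_comm]
    exact Finset.sum_congr rfl fun q _ => Finset.sum_congr rfl fun r _ => by rw [hs]
  apply (isUnit_of_invertible (2 : R)).smul_left_cancel.mp
  calc (2 : R) • ∑ q, ∑ r, s q r • w q r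
      = ∑ q, ∑ r, s q r • (w q r + w r q) := by
        simp only [smul_add, Finset.sum_add_distrib, ← swap, two_smul]
    _ = (2 : R) • (∑ q, s q q) • x := by
        simp [hw, Finset.sum_smul, two_smul, Finset.sum_add_distrib]

theorem sum_smul_omul_e_oconj_e {s : Fin 8 → Fin 8 → ℝ} (hs : ∀ p q, s p q = s q p) :
    ∑ p, ∑ q, s p q • omul (e p) (oconj (e q)) = (∑ p, s p p) • e 0 := by
  refine sum_smul_eq_sum_diag_smul hs fun p q => ?_
  simp [omul_oconj_add_swap, oRe_omul_e_oconj_e, ite_smul]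

theorem sum_smul_omul_omul_oconj_e {s : Fin 8 → Fin 8 → ℝ} (hs : ∀ q r, s q r = s r q) (x : Oct) :
    ∑ q, ∑ r, s q r • omul (omul x (oconj (e q))) (e r) = (∑ q, s q q) • x := by
  refine sum_smul_eq_sum_diag_smul hs fun q r => ?_
  simp [omul_omul_oconj_add_swap, oRe_omul_e_oconj_e, ite_smul]

theorem onSq_sum_smul_e (c : Fin 8 → ℝ) : onSq (∑ p, c p • e p) = ∑ p, c p ^ 2 := by
  have h : omul (∑ p, c p • e p) (oconj (∑ p, c p • e p)) = (∑ p, c p * c p) • e 0 := by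
    rw [← sum_smul_omul_e_oconj_e (s := fun p q => c q * c p) fun p q => mul_comm _ _,
      Finset.sum_comm]
    simp only [← omulBilin_apply, ← oconjLinear_apply, map_sum, map_smul, LinearMap.sum_apply,
      LinearMap.smul_apply, Finset.smul_sum, smul_smul]
  rw [onSq, h]
  simp [oRe, e, sq]

theorem fderiv_fderiv_apply_comm {𝕜 E F : Type*} [RCLike 𝕜] [NormedAddCommGroup E]
    [NormedSpace 𝕜 E] [NormedAddCommGroup F] [NormedSpace 𝕜 F] {f : E → F} {x : E}
    (hf : ContDiffAt 𝕜 2 f x) (v w : E) :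
    fderiv 𝕜 (fun y => fderiv 𝕜 f y w) x v = fderiv 𝕜 (fun y => fderiv 𝕜 f y v) x w := by
  have hdf : DifferentiableAt 𝕜 (fderiv 𝕜 f) x :=
    (hf.fderiv_right (m := 1) (by norm_num)).differentiableAt one_ne_zero
  have fderiv_apply (a b : E) :
      fderiv 𝕜 (fun y => fderiv 𝕜 f y b) x a = fderiv 𝕜 (fderiv 𝕜 f) x a b := by
    simp [fderiv_clm_apply hdf (differentiableAt_const b)]
  rw [fderiv_apply, fderiv_apply]
  exact hf.isSymmSndFDerivAt (by simp) v w

section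

variable {f : Pt → ℝ} {x : Pt} (i j k l : Fin 2) (p q r : Fin 8)

theorem contDiffAt_pd {m n : WithTop ℕ∞} (hf : ContDiffAt ℝ n f x) (hmn : m + 1 ≤ n) :
    ContDiffAt ℝ m (pd i p f) x :=
  ContDiffAt.clm_apply (hf.fderiv_right hmn) contDiffAt_const

theorem pd_comm (hf : ContDiffAt ℝ 2 f x) : pd i p (pd j q f) x = pd j q (pd i p f) x :=
  fderiv_fderiv_apply_comm hf _ _

theorem pd_pd_comm (hf : ContDiffAt ℝ 3 f x) :
    pd l r (pd i p (pd j q f)) x = pd l r (pd j q (pd i p f)) x := by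
  have h : pd i p (pd j q f) =ᶠ[nhds x] pd j q (pd i p f) := by
    filter_upwards [(hf.of_le (m := 2) (by norm_num)).eventually (by simp)] with y hy
    exact pd_comm i j p q hy
  exact DFunLike.congr_fun h.fderiv_eq (uvec l r)

theorem hessEntry_swap (hf : ContDiffAt ℝ 2 f x) :
    hessEntry f j i x = oconj (hessEntry f i j x) := by
  simp only [hessEntry, ← oconjLinear_apply, map_sum, map_smul]
  simp only [oconjLinear_apply, oconj_omul_oconj]
  rw [Finset.sum_comm]
  simp only [pd_comm i j _ _ hf]

theorem hessEntry_self_eq_lap_smul (hf : ContDiffAt ℝ 2 f x) :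
    hessEntry f k k x = lap k f x • e 0 :=
  sum_smul_omul_e_oconj_e fun p q => pd_comm k k p q hf

theorem fderiv_hessEntry (hf : ContDiffAt ℝ 3 f x) :
    fderiv ℝ (hessEntry f i j) x (uvec l r) = hessEntry (pd l r f) i j x := by
  have hdiff (p q : Fin 8) : DifferentiableAt ℝ (pd i p (pd j q f)) x :=
    (contDiffAt_pd (m := 1) i p (contDiffAt_pd (m := 2) j q hf (by norm_num))
      (by norm_num)).differentiableAt one_ne_zero
  have hderiv : HasFDerivAt (hessEntry f i j)
      (∑ p, ∑ q, (fderiv ℝ (pd i p (pd j q f)) x).smulRight (omul (e p) (oconj (e q)))) x :=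
    HasFDerivAt.fun_sum fun p _ => HasFDerivAt.fun_sum fun q _ =>
      (hdiff p q).hasFDerivAt.smul_const _
  have hcomm (p q : Fin 8) : pd l r (pd i p (pd j q f)) x = pd i p (pd j q (pd l r f)) x := by
    rw [pd_comm l i r p (contDiffAt_pd j q hf (by norm_num)), pd_pd_comm l j i r q p hf]
  simp only [hderiv.fderiv, hessEntry, ← hcomm, sum_apply, ContinuousLinearMap.smulRight_apply]
  rfl

theorem sum_omul_hessEntry_pd_e (hf : ContDiffAt ℝ 3 f x) :
    ∑ r, omul (hessEntry (pd k r f) i k x) (e r) = ∑ p, lap k (pd i p f) x • e p := by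
  have hlap (p : Fin 8) : lap k (pd i p f) x = ∑ q, pd i p (pd k q (pd k q f)) x := by
    refine Finset.sum_congr rfl fun q _ => ?_
    rw [pd_pd_comm k i k q p q hf, pd_comm k i q p (contDiffAt_pd k q hf (by norm_num))]
  simp only [hessEntry, ← omulBilin_apply, map_sum, map_smul, LinearMap.sum_apply,
    LinearMap.smul_apply]
  simp only [omulBilin_apply]
  rw [Finset.sum_comm]
  refine Finset.sum_congr rfl fun p _ => ?_
  rw [Finset.sum_comm, hlap]
  exact sum_smul_omul_omul_oconj_e (fun q r => pd_pd_comm k k i q r p hf) (e p)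

theorem sum_onSq_fderiv_hessEntry_self_le (hf : ContDiffAt ℝ 3 f x) :
    ∑ p, onSq (fderiv ℝ (hessEntry f k k) x (uvec i p))
      ≤ 8 * ∑ r, onSq (fderiv ℝ (hessEntry f i k) x (uvec k r)) := by
  simp only [fderiv_hessEntry _ _ _ _ hf]
  calc ∑ p, onSq (hessEntry (pd i p f) k k x)
      = ∑ p, lap k (pd i p f) x ^ 2 := by
        simp only [hessEntry_self_eq_lap_smul k (contDiffAt_pd i _ hf (by norm_num)), onSq_smul,
          onSq_e, mul_one]
    _ = onSq (∑ r, omul (hessEntry (pd k r f) i k x) (e r)) := by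
        rw [sum_omul_hessEntry_pd_e i k hf, onSq_sum_smul_e]
    _ ≤ 8 * ∑ r, onSq (omul (hessEntry (pd k r f) i k x) (e r)) := by
        simpa using onSq_sum_le Finset.univ fun r => omul (hessEntry (pd k r f) i k x) (e r)
    _ = 8 * ∑ r, onSq (hessEntry (pd k r f) i k x) := by
        simp only [onSq_omul, onSq_e, mul_one]

theorem onSq_fderiv_hessEntry_swap (hf : ContDiffAt ℝ 3 f x) :
    onSq (fderiv ℝ (hessEntry f j i) x (uvec l r))
      = onSq (fderiv ℝ (hessEntry f i j) x (uvec l r)) := by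
  rw [fderiv_hessEntry j i l r hf, fderiv_hessEntry i j l r hf,
    hessEntry_swap i j (contDiffAt_pd l r hf (by norm_num)), onSq_oconj]

end

theorem sum_div_le_four_mul_sum_div {ι R : Type*} [Fintype ι] [Field R] [LinearOrder R]
    [IsStrictOrderedRing R] {N : ι → ι → ι → R} {c : ι → ι → R}
    (hN : ∀ k i l, 0 ≤ N k i l) (hN_swap : ∀ k i l, N k i l = N i k l)
    (hN_le : ∀ i k, i ≠ k → N k k i ≤ 8 * N i k k) (hc : ∀ i k, 0 ≤ c i k)
    (hc_swap : ∀ i k, c i k = c k i) :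
    ∑ i, ∑ k, N k k i / c i k ≤ 4 * ∑ i, ∑ k, ∑ l, N k i l / c i k := by
  classical
  have hpair (i k : ι) : N k k i + N i i k ≤ 8 * ∑ l, N k i l := by
    rcases eq_or_ne i k with rfl | hik
    · have := Finset.single_le_sum (fun l _ => hN i i l) (Finset.mem_univ i)
      linarith [hN i i i]
    · have := Finset.add_le_sum (fun l _ => hN k i l) (Finset.mem_univ i) (Finset.mem_univ k) hik
      linarith [hN_le i k hik, hN_le k i hik.symm, hN_swap k i k]
  have hpair_div (i k : ι) : N k k i / c i k + N i i k / c k i ≤ 8 * ∑ l, N k i l / c i k := by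
    rw [hc_swap k i, ← add_div, ← Finset.sum_div, ← mul_div_assoc]
    exact div_le_div_of_nonneg_right (hpair i k) (hc i k)
  have hsum := Finset.sum_le_sum fun i (_ : i ∈ Finset.univ) =>
    Finset.sum_le_sum fun k (_ : k ∈ Finset.univ) => hpair_div i k
  simp only [Finset.sum_add_distrib, ← Finset.mul_sum] at hsum
  rw [Finset.sum_comm (f := fun i k => N i i k / c k i)] at hsum
  linarith

theorem elementary_inequality_general {u : Pt → ℝ} {z : Pt} (hu : ContDiffAt ℝ 3 u z)
    (hpos : 0 < oRe (hessEntry u 0 0 z) * oRe (hessEntry u 1 1 z)) :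
    ∑ p : Fin 8, ∑ i : Fin 2, ∑ k : Fin 2,
        onSq (fderiv ℝ (hessEntry u k k) z (uvec i p))
          / (oRe (hessEntry u i i z) * oRe (hessEntry u k k z))
      ≤ 4 * ∑ p : Fin 8, ∑ i : Fin 2, ∑ k : Fin 2, ∑ l : Fin 2,
          onSq (fderiv ℝ (hessEntry u k i) z (uvec l p))
            / (oRe (hessEntry u i i z) * oRe (hessEntry u k k z)) := by
  have hc : ∀ i k, 0 ≤ oRe (hessEntry u i i z) * oRe (hessEntry u k k z) := by
    simp [Fin.forall_fin_two, mul_self_nonneg, hpos.le, mul_comm (oRe (hessEntry u 1 1 z))]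
  have key := sum_div_le_four_mul_sum_div
    (N := fun k i l => ∑ p, onSq (fderiv ℝ (hessEntry u k i) z (uvec l p)))
    (fun k i l => Finset.sum_nonneg fun p _ => onSq_nonneg _)
    (fun k i l => Finset.sum_congr rfl fun p _ => onSq_fderiv_hessEntry_swap i k l p hu)
    (fun i k _ => sum_onSq_fderiv_hessEntry_self_le i k hu) hc (fun _ _ => mul_comm _ _)
  have sum_comm_coord (g : Fin 8 → Fin 2 → ℝ) : ∑ p, ∑ i, g p i = ∑ i, ∑ p, g p i :=
    Finset.sum_comm
  simpa only [sum_comm_coord, Finset.sum_div] using key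

/-- Proposition 13.1 (the elementary inequality): if u is C⁴ and strictly octonionic
plurisubharmonic on an open set U, and its octonionic Hessian is diagonal at z ∈ U
(i.e. u_{1̄2}(z) = 0), then
Σ_{p,i,k} |∂u_{k̄k}/∂x_i^p|²/(u_{īi}u_{k̄k}) ≤ 4·Σ_{p,i,k,l} |∂u_{k̄i}/∂x_l^p|²/(u_{īi}u_{k̄k})
at the point z. -/
theorem elementary_inequality (U : Set Pt) (hU : IsOpen U) (u : Pt → ℝ)
    (hu : ContDiffOn ℝ 4 u U)
    (hpsh : ∀ x ∈ U, 0 < oRe (hessEntry u 0 0 x) ∧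
        0 < oRe (hessEntry u 0 0 x) * oRe (hessEntry u 1 1 x)
              - onSq (hessEntry u 0 1 x))
    (z : Pt) (hz : z ∈ U) (hdiag : hessEntry u 0 1 z = 0) :
    ∑ p : Fin 8, ∑ i : Fin 2, ∑ k : Fin 2,
        onSq (fderiv ℝ (hessEntry u k k) z (uvec i p))
          / (oRe (hessEntry u i i z) * oRe (hessEntry u k k z))
      ≤ 4 * ∑ p : Fin 8, ∑ i : Fin 2, ∑ k : Fin 2, ∑ l : Fin 2,
          onSq (fderiv ℝ (hessEntry u k i) z (uvec l p))
            / (oRe (hessEntry u i i z) * oRe (hessEntry u k k z)) := by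
  have hdet := (hpsh z hz).2
  exact elementary_inequality_general ((hu.contDiffAt (hU.mem_nhds hz)).of_le (by norm_num))
    (by linarith [onSq_nonneg (hessEntry u 0 1 z)])
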